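/- arXiv:1912.04815 — 4 statements merged into one kernel-verified Lean document; each statement's English description precedes it below -/
import Mathlib

section
/- Let n ≥ 1, let P be an n×n nonnegative row sub-stochastic matrix, let w ∈ ℝ^n with w ≥ 0, and let c ∈ ℝ^n. Define the sequence x(0) = 0 and x(t+1) = S_0^w(Pᵀx(t) + c) for t ≥ 0. Then the sequence x(t) is entrywise nondecreasing and converges, as t → ∞, to the minimal equilibrium x̲ of the network (P, w) with exogenous flow c (i.e., its limit x̲ satisfies x̲ = S_0^w(Pᵀx̲ + c) and x̲ ≤ x for every x with x = S_0^w(Pᵀx + c)). -/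
open Matrix Finset Filter Topology

/-- The saturation function `S_0^w`. -/
def sat {n : ℕ} (w y : Fin n → ℝ) : Fin n → ℝ := fun i => min (max (y i) 0) (w i)

/-- `x` is an equilibrium of the network `(P, w)` with exogenous flow `c`. -/
def IsEquil {n : ℕ} (P : Matrix (Fin n) (Fin n) ℝ) (w c x : Fin n → ℝ) : Prop :=
  x = sat w (Pᵀ.mulVec x + c)

theorem sat_nonneg {n : ℕ} {w : Fin n → ℝ} (hw : 0 ≤ w) (y : Fin n → ℝ) : 0 ≤ sat w y :=
  fun i => le_min (le_max_right _ _) (hw i)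

theorem sat_le {n : ℕ} (w y : Fin n → ℝ) : sat w y ≤ w :=
  fun _ => min_le_right _ _

theorem sat_mono {n : ℕ} (w : Fin n → ℝ) : Monotone (sat w) :=
  fun _ _ h i => min_le_min_right _ (max_le_max_right _ (h i))

theorem continuous_sat {n : ℕ} (w : Fin n → ℝ) : Continuous (sat w) := by
  unfold sat
  fun_prop

/-- The network update map is monotone when the routing matrix is nonnegative. -/
theorem monotone_sat_mulVec_add {n : ℕ} {P : Matrix (Fin n) (Fin n) ℝ}
    (hP : ∀ i j, 0 ≤ P i j) (w c : Fin n → ℝ) :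
    Monotone fun x => sat w (Pᵀ.mulVec x + c) := by
  intro x y h
  refine sat_mono w (add_le_add_left (fun i => ?_) c)
  simp only [mulVec, dotProduct, transpose_apply]
  exact Finset.sum_le_sum fun j _ => mul_le_mul_of_nonneg_left (h j) (hP j i)

theorem continuous_sat_mulVec_add {n : ℕ} (P : Matrix (Fin n) (Fin n) ℝ) (w c : Fin n → ℝ) :
    Continuous fun x => sat w (Pᵀ.mulVec x + c) :=
  (continuous_sat w).comp ((continuous_const.matrix_mulVec continuous_id).add continuous_const)

/-- the iteration started at `0` is entrywise nondecreasing and converges to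
the minimal equilibrium. -/
theorem iteration_from_zero_converges_to_minimal
    {n : ℕ} (hn : 1 ≤ n) (P : Matrix (Fin n) (Fin n) ℝ)
    (hP : ∀ i j, 0 ≤ P i j) (hsub : ∀ i, ∑ j, P i j ≤ 1)
    (w : Fin n → ℝ) (hw : 0 ≤ w) (c : Fin n → ℝ)
    (x : ℕ → Fin n → ℝ) (hx0 : x 0 = 0)
    (hxs : ∀ t, x (t + 1) = sat w (Pᵀ.mulVec (x t) + c)) :
    Monotone x ∧
    ∃ xlo : Fin n → ℝ, Tendsto x atTop (𝓝 xlo) ∧ IsEquil P w c xlo ∧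
      ∀ y, IsEquil P w c y → xlo ≤ y := by
  have hF := monotone_sat_mulVec_add hP w c
  have hmono : Monotone x := by
    refine monotone_nat_of_le_succ fun t => ?_
    induction t with
    | zero => rw [hx0, hxs]; exact sat_nonneg hw _
    | succ t ih => rw [hxs t, hxs (t + 1)]; exact hF ih
  have hle : ∀ t, x t ≤ w := by
    rintro (_ | t)
    · rw [hx0]; exact hw
    · rw [hxs]; exact sat_le _ _
  have hlim : Tendsto x atTop (𝓝 (⨆ t, x t)) :=
    tendsto_atTop_ciSup hmono ⟨w, Set.forall_mem_range.2 hle⟩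
  refine ⟨hmono, _, hlim, ?_, fun y hy => ?_⟩
  · refine tendsto_nhds_unique ((tendsto_add_atTop_iff_nat 1).2 hlim) ?_
    simp only [hxs]
    exact ((continuous_sat_mulVec_add P w c).tendsto _).comp hlim
  · refine le_of_tendsto' hlim fun t => ?_
    induction t with
    | zero => rw [hx0, hy]; exact sat_nonneg hw _
    | succ t ih => rw [hxs, hy]; exact hF ih
end

section
/- Let n ≥ 1, let P be an n×n irreducible row-stochastic matrix, let w ∈ ℝ^n with w ≥ 0, and let c ∈ ℝ^n. Let π ∈ ℝ^n be the invariant probability vector of P (π = Pᵀπ, Σ_i π_i = 1, π_i > 0 for all i), and suppose ν ∈ ℝ^n satisfies ν = Pᵀν + c. If the network (P, w) with exogenous flow c has more than one equilibrium, then Σ_i c_i = 0 and min_i (ν_i / π_i) + min_i ((w_i − ν_i) / π_i) > 0. -/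
open Matrix Finset Filter Topology

/-- Reachability in the graph `G_P`. -/
def Reaches {n : ℕ} (P : Matrix (Fin n) (Fin n) ℝ) : Fin n → Fin n → Prop :=
  Relation.ReflTransGen (fun a b => 0 < P a b)

/-- Clipping to `[0, w]` is nonexpansive. -/
lemma abs_clip_sub_clip_le (w a b : ℝ) :
    |min (max a 0) w - min (max b 0) w| ≤ |a - b| :=
  (abs_min_sub_min_le_max _ _ _ _).trans <| by
    simpa using abs_max_sub_max_le_abs a b 0

/-- Clipping to `[0, w]` preserves a difference up to sign only if it preserves it exactly. -/
lemma clip_sub_clip_eq_of_abs_eq {w a b : ℝ}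
    (h : |min (max a 0) w - min (max b 0) w| = |a - b|) :
    min (max a 0) w - min (max b 0) w = a - b := by
  rcases le_total a b with hab | hab
  · have hm : min (max a 0) w ≤ min (max b 0) w := by gcongr
    rw [abs_of_nonpos (by linarith), abs_of_nonpos (by linarith)] at h
    linarith
  · have hm : min (max b 0) w ≤ min (max a 0) w := by gcongr
    rwa [abs_of_nonneg (by linarith), abs_of_nonneg (by linarith)] at h

/-- Clipping to `[0, w]` preserves a positive difference only at unsaturated points. -/
lemma clip_eq_self_of_sub_eq {w a b : ℝ} (hab : a < b)
    (h : min (max b 0) w - min (max a 0) w = b - a) : min (max a 0) w = a := by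
  grind

/-- A vector invariant under the transpose of an irreducible nonnegative matrix is a multiple of
any positive invariant vector. -/
lemma exists_eq_smul_of_invariant {n : ℕ} (hn : 1 ≤ n) {P : Matrix (Fin n) (Fin n) ℝ}
    (hP : ∀ i j, 0 ≤ P i j) (hirr : ∀ i j, Reaches P i j) {π : Fin n → ℝ}
    (hπ : Pᵀ.mulVec π = π) (hpos : ∀ i, 0 < π i) {d : Fin n → ℝ} (hd : Pᵀ.mulVec d = d) :
    ∃ k : ℝ, d = k • π := by
  have : Nonempty (Fin n) := ⟨⟨0, hn⟩⟩
  obtain ⟨m, hm⟩ := Finite.exists_min fun i => d i / π i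
  refine ⟨d m / π m, ?_⟩
  set k := d m / π m with hk
  set e : Fin n → ℝ := d - k • π with he
  have hinv : Pᵀ.mulVec e = e := by
    rw [he, mulVec_sub, mulVec_smul, hd, hπ]
  have hnonneg : ∀ i, 0 ≤ e i := fun i => by
    have := (le_div_iff₀ (hpos i)).1 (hm i)
    simpa [he] using this
  have hem : e m = 0 := by
    simp [he, hk, (hpos m).ne']
  have hzero : ∀ i, e i = 0 := fun i => by
    induction hirr i m using Relation.ReflTransGen.head_induction_on with
    | refl => exact hem
    | @head a b hab _ ih =>
      have hsum : ∑ j, P j b * e j = 0 := by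
        rw [← ih]
        exact congrFun hinv b
      have hterm := (Finset.sum_eq_zero_iff_of_nonneg
        fun j _ => mul_nonneg (hP j b) (hnonneg j)).1 hsum a (Finset.mem_univ a)
      exact (mul_eq_zero.1 hterm).resolve_left hab.ne'
  exact sub_eq_zero.1 (funext hzero)

/-- The transpose of a row-stochastic matrix preserves the sum of the entries. -/
lemma sum_transpose_mulVec {n : ℕ} {P : Matrix (Fin n) (Fin n) ℝ}
    (hst : ∀ i, ∑ j, P i j = 1) (v : Fin n → ℝ) : ∑ i, Pᵀ.mulVec v i = ∑ i, v i := by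
  simp only [mulVec, dotProduct, transpose_apply]
  rw [Finset.sum_comm]
  simp [← Finset.sum_mul, hst]

/-- The difference of two equilibria is an invariant vector. -/
lemma IsEquil.invariant_sub {n : ℕ} {P : Matrix (Fin n) (Fin n) ℝ}
    (hP : ∀ i j, 0 ≤ P i j) (hst : ∀ i, ∑ j, P i j = 1) {w c x y : Fin n → ℝ}
    (hx : IsEquil P w c x) (hy : IsEquil P w c y) : Pᵀ.mulVec (x - y) = x - y := by
  have hxi : ∀ i, x i = min (max (Pᵀ.mulVec x i + c i) 0) (w i) := congrFun hx
  have hyi : ∀ i, y i = min (max (Pᵀ.mulVec y i + c i) 0) (w i) := congrFun hy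
  have hmul : ∀ i, Pᵀ.mulVec (x - y) i =
      (Pᵀ.mulVec x i + c i) - (Pᵀ.mulVec y i + c i) := fun i => by
    rw [mulVec_sub, Pi.sub_apply]
    ring
  have hle : ∀ i, |x i - y i| ≤ |Pᵀ.mulVec (x - y) i| := fun i => by
    rw [hmul, hxi i, hyi i]
    exact abs_clip_sub_clip_le _ _ _
  have hle' : ∀ i, |Pᵀ.mulVec (x - y) i| ≤ Pᵀ.mulVec (fun j => |x j - y j|) i := fun i => by
    simp only [mulVec, dotProduct, transpose_apply]
    refine (Finset.abs_sum_le_sum_abs _ _).trans_eq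
      (Finset.sum_congr rfl fun j _ => ?_)
    simp [abs_mul, abs_of_nonneg (hP j i)]
  have heq := (Finset.sum_eq_sum_iff_of_le fun i _ => (hle i).trans (hle' i)).1
    (sum_transpose_mulVec hst _).symm
  ext i
  have habs := le_antisymm (hle i) ((hle' i).trans_eq (heq i (Finset.mem_univ i)).symm)
  rw [hmul, hxi i, hyi i] at habs
  rw [hmul, Pi.sub_apply, hxi i, hyi i]
  exact (clip_sub_clip_eq_of_abs_eq habs).symm

/-- If two equilibria differ by a positive multiple of the invariant vector, then the margins of
`ν` to the bounds `0` and `w`, measured relative to `π`, have a positive sum. -/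
lemma IsEquil.margin_pos {n : ℕ} (hn : 1 ≤ n) {P : Matrix (Fin n) (Fin n) ℝ}
    (hP : ∀ i j, 0 ≤ P i j) (hirr : ∀ i j, Reaches P i j) {w c π ν x y : Fin n → ℝ}
    (hw : 0 ≤ w) (hπ : Pᵀ.mulVec π = π) (hpos : ∀ i, 0 < π i) (hν : ν = Pᵀ.mulVec ν + c)
    (hx : IsEquil P w c x) (hy : IsEquil P w c y) {k : ℝ} (hk : 0 < k)
    (hxy : x - y = k • π) :
    0 < (⨅ i, ν i / π i) + ⨅ i, (w i - ν i) / π i := by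
  have : Nonempty (Fin n) := ⟨⟨0, hn⟩⟩
  have hxi : ∀ i, x i = min (max (Pᵀ.mulVec x i + c i) 0) (w i) := congrFun hx
  have hyi : ∀ i, y i = min (max (Pᵀ.mulVec y i + c i) 0) (w i) := congrFun hy
  have hdiff : ∀ i, x i - y i = k * π i := congrFun hxy
  have hmul : ∀ i, Pᵀ.mulVec x i - Pᵀ.mulVec y i = k * π i := fun i => by
    rw [← Pi.sub_apply, ← mulVec_sub, hxy, mulVec_smul, hπ]
    rfl
  have hfix : y = Pᵀ.mulVec y + c := by
    ext i
    have hki : 0 < k * π i := mul_pos hk (hpos i)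
    rw [hyi i]
    refine clip_eq_self_of_sub_eq (b := Pᵀ.mulVec x i + c i) ?_ ?_
    · linarith [hmul i]
    · rw [← hxi i, ← hyi i]
      linarith [hmul i, hdiff i]
  obtain ⟨t, ht⟩ := exists_eq_smul_of_invariant hn hP hirr hπ hpos (d := y - ν) <| by
    rw [mulVec_sub, ← add_sub_add_right_eq_sub _ _ c, ← hfix, ← hν]
  have hti : ∀ i, y i - ν i = t * π i := congrFun ht
  have hlow : -t ≤ ⨅ i, ν i / π i := le_ciInf fun i => by
    have : 0 ≤ y i := by
      rw [hyi i]
      exact le_min (le_max_right _ _) (hw i)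
    rw [le_div_iff₀ (hpos i)]
    linarith [hti i]
  have hhigh : k + t ≤ ⨅ i, (w i - ν i) / π i := le_ciInf fun i => by
    have : x i ≤ w i := by
      rw [hxi i]
      exact min_le_right _ _
    rw [le_div_iff₀ (hpos i)]
    linarith [hti i, hdiff i]
  linarith

/-- necessary conditions for non-uniqueness in the irreducible stochastic
case: if there are multiple equilibria then `∑ᵢ cᵢ = 0` and
`minᵢ (νᵢ/πᵢ) + minᵢ ((wᵢ − νᵢ)/πᵢ) > 0`. -/
theorem irreducible_nonuniqueness_necessary
    {n : ℕ} (hn : 1 ≤ n) (P : Matrix (Fin n) (Fin n) ℝ)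
    (hP : ∀ i j, 0 ≤ P i j) (hst : ∀ i, ∑ j, P i j = 1)
    (hirr : ∀ i j, Reaches P i j)
    (w : Fin n → ℝ) (hw : 0 ≤ w) (c : Fin n → ℝ)
    (π : Fin n → ℝ) (hπ1 : Pᵀ.mulVec π = π) (hπ2 : ∑ i, π i = 1) (hπ3 : ∀ i, 0 < π i)
    (ν : Fin n → ℝ) (hν : ν = Pᵀ.mulVec ν + c)
    (hmulti : ∃ x y : Fin n → ℝ, IsEquil P w c x ∧ IsEquil P w c y ∧ x ≠ y) :
    ∑ i, c i = 0 ∧ 0 < (⨅ i, ν i / π i) + ⨅ i, (w i - ν i) / π i := by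
  obtain ⟨x, y, hx, hy, hne⟩ := hmulti
  refine ⟨?_, ?_⟩
  · have hsum : ∑ i, ν i = ∑ i, (Pᵀ.mulVec ν i + c i) :=
      Finset.sum_congr rfl fun i _ => congrFun hν i
    rw [Finset.sum_add_distrib, sum_transpose_mulVec hst] at hsum
    linarith
  · obtain ⟨k, hk⟩ := exists_eq_smul_of_invariant hn hP hirr hπ1 hπ3
      (hx.invariant_sub hP hst hy)
    rcases lt_trichotomy k 0 with hneg | rfl | hpos
    · refine hy.margin_pos hn hP hirr hw hπ1 hπ3 hν hx (neg_pos.2 hneg) ?_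
      rw [neg_smul, ← hk, neg_sub]
    · exact absurd (sub_eq_zero.1 (hk.trans (zero_smul ℝ π))) hne
    · exact hx.margin_pos hn hP hirr hw hπ1 hπ3 hν hy hpos hk
end

section
/- Let n ≥ 1, let P be an n×n irreducible row-stochastic matrix, let w ∈ ℝ^n with w ≥ 0, and let c ∈ ℝ^n with Σ_i c_i = 0. Let π ∈ ℝ^n be the invariant probability vector of P (π = Pᵀπ, Σ_i π_i = 1, π_i > 0 for all i), and suppose ν ∈ ℝ^n satisfies ν = Pᵀν + c. If min_i (ν_i / π_i) + min_i ((w_i − ν_i) / π_i) > 0, then the set of equilibria of the network (P, w) with exogenous flow c equals the segment { ν + α π : −min_i (ν_i / π_i) ≤ α ≤ min_i ((w_i − ν_i) / π_i) }, and in particular there are multiple (infinitely many) equilibria. -/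
open Matrix Finset Filter Topology

/-- Multiplication by the transpose of a row-stochastic matrix does not increase the `ℓ¹` norm. -/
theorem sum_abs_transpose_mulVec_le {ι : Type*} [Fintype ι] (P : Matrix ι ι ℝ)
    (hP : ∀ i j, 0 ≤ P i j) (hst : ∀ i, ∑ j, P i j = 1) (z : ι → ℝ) :
    ∑ i, |(Pᵀ.mulVec z) i| ≤ ∑ i, |z i| := by
  calc ∑ i, |(Pᵀ.mulVec z) i| ≤ ∑ i, ∑ j, P j i * |z j| := by
        refine Finset.sum_le_sum fun i _ => ?_
        simp only [Matrix.mulVec, dotProduct, Matrix.transpose_apply]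
        refine (Finset.abs_sum_le_sum_abs _ _).trans_eq ?_
        exact Finset.sum_congr rfl fun j _ => by rw [abs_mul, abs_of_nonneg (hP j i)]
    _ = ∑ j, |z j| := by
        rw [Finset.sum_comm]
        exact Finset.sum_congr rfl fun j _ => by rw [← Finset.sum_mul, hst, one_mul]

/-- A nonnegative invariant vector of an irreducible nonnegative matrix vanishes as soon as one of
its entries does. -/
theorem eq_zero_of_transpose_mulVec_eq_self {n : ℕ} (P : Matrix (Fin n) (Fin n) ℝ)
    (hP : ∀ i j, 0 ≤ P i j) (hirr : ∀ i j, Reaches P i j) {v : Fin n → ℝ} (hv : 0 ≤ v)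
    (hfix : Pᵀ.mulVec v = v) {k : Fin n} (hk : v k = 0) : v = 0 := by
  funext j
  refine Relation.ReflTransGen.head_induction_on (motive := fun a _ => v a = 0)
    (hirr j k) hk ?_
  intro a b hab _ hb
  have hsum : ∑ i, P i b * v i = 0 := by
    have := congrFun hfix b
    simpa only [Matrix.mulVec, dotProduct, Matrix.transpose_apply, hb] using this
  have := (Finset.sum_eq_zero_iff_of_nonneg fun i _ => mul_nonneg (hP i b) (hv i)).1 hsum a
    (Finset.mem_univ a)
  exact (mul_eq_zero.1 this).resolve_left hab.ne'

/-- The invariant vectors of an irreducible nonnegative matrix with a positive invariant vector `π`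
are the multiples of `π`. -/
theorem exists_eq_smul_of_transpose_mulVec_eq_self {n : ℕ} [Nonempty (Fin n)]
    (P : Matrix (Fin n) (Fin n) ℝ) (hP : ∀ i j, 0 ≤ P i j) (hirr : ∀ i j, Reaches P i j)
    {π : Fin n → ℝ} (hπ : Pᵀ.mulVec π = π) (hπpos : ∀ i, 0 < π i)
    {z : Fin n → ℝ} (hz : Pᵀ.mulVec z = z) : ∃ a : ℝ, z = a • π := by
  obtain ⟨k, hk⟩ := Finite.exists_min fun i => z i / π i
  refine ⟨z k / π k, sub_eq_zero.1 ?_⟩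
  refine eq_zero_of_transpose_mulVec_eq_self P hP hirr (k := k) (fun i => ?_) ?_ ?_
  · simpa using (le_div_iff₀ (hπpos i)).1 (hk i)
  · rw [Matrix.mulVec_sub, Matrix.mulVec_smul, hz, hπ]
  · simp [(hπpos k).ne']

/-- Clamping `y` to `[0, w]` does not move it away from an interior point `u`. -/
theorem abs_clamp_sub_le {u w : ℝ} (hu : 0 < u) (huw : u < w) (y : ℝ) :
    |min (max y 0) w - u| ≤ |y - u| := by
  grind

/-- Clamping `y ∉ [0, w]` to `[0, w]` moves it strictly closer to every interior point. -/
theorem clamp_eq_self_of_abs_sub_le {u w y : ℝ} (hu : 0 < u) (huw : u < w)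
    (h : |y - u| ≤ |min (max y 0) w - u|) : min (max y 0) w = y := by
  grind

/-- If the affine flow `x ↦ Pᵀ x + c` has a fixed point in the interior of the box `[0, w]`, then
every equilibrium is a fixed point of the flow. -/
theorem IsEquil.eq_transpose_mulVec_add {n : ℕ} {P : Matrix (Fin n) (Fin n) ℝ}
    (hP : ∀ i j, 0 ≤ P i j) (hst : ∀ i, ∑ j, P i j = 1) {w c u x : Fin n → ℝ}
    (hu : Pᵀ.mulVec u + c = u) (hu0 : ∀ i, 0 < u i) (huw : ∀ i, u i < w i)
    (hx : IsEquil P w c x) : Pᵀ.mulVec x + c = x := by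
  set y := Pᵀ.mulVec x + c with hy
  have hxi : ∀ i, x i = min (max (y i) 0) (w i) := fun i => congrFun hx i
  have hyu : y - u = Pᵀ.mulVec (x - u) := by
    rw [Matrix.mulVec_sub, hy]
    nth_rewrite 1 [← hu]
    abel
  have hle : ∀ i ∈ Finset.univ, |x i - u i| ≤ |y i - u i| := fun i _ => by
    rw [hxi i]
    exact abs_clamp_sub_le (hu0 i) (huw i) _
  have hsum : ∑ i, |y i - u i| ≤ ∑ i, |x i - u i| := by
    have := sum_abs_transpose_mulVec_le P hP hst (x - u)
    rw [← hyu] at this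
    exact this
  have heq := (Finset.sum_eq_sum_iff_of_le hle).1 (le_antisymm (Finset.sum_le_sum hle) hsum)
  funext i
  have hi := (heq i (Finset.mem_univ i)).ge
  rw [hxi i] at hi ⊢
  exact (clamp_eq_self_of_abs_sub_le (hu0 i) (huw i) hi).symm

/-- A fixed point of the affine flow lying in the box `[0, w]` is an equilibrium. -/
theorem isEquil_of_transpose_mulVec_add_eq {n : ℕ} {P : Matrix (Fin n) (Fin n) ℝ}
    {w c x : Fin n → ℝ} (hx : Pᵀ.mulVec x + c = x) (hx0 : 0 ≤ x) (hxw : x ≤ w) :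
    IsEquil P w c x := by
  rw [IsEquil, hx]
  funext i
  exact ((min_eq_left ((max_eq_left (hx0 i)).le.trans (hxw i))).trans (max_eq_left (hx0 i))).symm

/-- in the irreducible stochastic case with `∑ᵢ cᵢ = 0` and
`minᵢ (νᵢ/πᵢ) + minᵢ ((wᵢ − νᵢ)/πᵢ) > 0`, the set of equilibria is exactly the segment
`{ν + α π : −minᵢ (νᵢ/πᵢ) ≤ α ≤ minᵢ ((wᵢ − νᵢ)/πᵢ)}`, and in particular it is
infinite. -/
theorem irreducible_nonuniqueness_sufficient_segment
    {n : ℕ} (hn : 1 ≤ n) (P : Matrix (Fin n) (Fin n) ℝ)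
    (hP : ∀ i j, 0 ≤ P i j) (hst : ∀ i, ∑ j, P i j = 1)
    (hirr : ∀ i j, Reaches P i j)
    (w : Fin n → ℝ) (hw : 0 ≤ w) (c : Fin n → ℝ) (hc : ∑ i, c i = 0)
    (π : Fin n → ℝ) (hπ1 : Pᵀ.mulVec π = π) (hπ2 : ∑ i, π i = 1) (hπ3 : ∀ i, 0 < π i)
    (ν : Fin n → ℝ) (hν : ν = Pᵀ.mulVec ν + c)
    (hpos : 0 < (⨅ i, ν i / π i) + ⨅ i, (w i - ν i) / π i) :
    {x : Fin n → ℝ | IsEquil P w c x} =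
      {x : Fin n → ℝ | ∃ α : ℝ, -(⨅ i, ν i / π i) ≤ α ∧
        α ≤ (⨅ i, (w i - ν i) / π i) ∧ x = ν + α • π} ∧
    {x : Fin n → ℝ | IsEquil P w c x}.Infinite := by
  have : Nonempty (Fin n) := ⟨⟨0, hn⟩⟩
  set a := ⨅ i, ν i / π i
  set b := ⨅ i, (w i - ν i) / π i
  have hflow : ∀ α : ℝ, Pᵀ.mulVec (ν + α • π) + c = ν + α • π := fun α => by
    rw [Matrix.mulVec_add, Matrix.mulVec_smul, hπ1, add_right_comm, ← hν]
  have haν : ∀ i, a * π i ≤ ν i := fun i =>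
    (le_div_iff₀ (hπ3 i)).1 (ciInf_le (Set.finite_range fun i => ν i / π i).bddBelow i)
  have hbν : ∀ i, b * π i ≤ w i - ν i := fun i =>
    (le_div_iff₀ (hπ3 i)).1 (ciInf_le (Set.finite_range fun i => (w i - ν i) / π i).bddBelow i)
  have hset : {x : Fin n → ℝ | IsEquil P w c x} =
      {x : Fin n → ℝ | ∃ α : ℝ, -a ≤ α ∧ α ≤ b ∧ x = ν + α • π} := by
    ext x
    simp only [Set.mem_ofPred_eq]
    constructor
    · intro hx
      have hfix : Pᵀ.mulVec x + c = x := by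
        refine hx.eq_transpose_mulVec_add hP hst (hflow ((b - a) / 2)) (fun i => ?_) fun i => ?_
        · have := haν i
          have := mul_pos hpos (hπ3 i)
          simp only [Pi.add_apply, Pi.smul_apply, smul_eq_mul]
          linarith
        · have := hbν i
          have := mul_pos hpos (hπ3 i)
          simp only [Pi.add_apply, Pi.smul_apply, smul_eq_mul]
          linarith
      have hdiff : Pᵀ.mulVec (x - ν) = x - ν := by
        rw [Matrix.mulVec_sub, ← add_sub_add_right_eq_sub _ _ c, hfix, ← hν]
      obtain ⟨α, hα⟩ := exists_eq_smul_of_transpose_mulVec_eq_self P hP hirr hπ1 hπ3 hdiff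
      have hxα : ∀ i, x i - ν i = α * π i := fun i => congrFun hα i
      have hxi : ∀ i, x i = min (max ((Pᵀ.mulVec x + c) i) 0) (w i) := fun i => congrFun hx i
      refine ⟨α, neg_le.1 (le_ciInf fun i => ?_), le_ciInf fun i => ?_, ?_⟩
      · have : 0 ≤ x i := by
          rw [hxi i]
          exact le_min (le_max_right _ _) (hw i)
        rw [le_div_iff₀ (hπ3 i)]
        linarith [hxα i]
      · have : x i ≤ w i := by
          rw [hxi i]
          exact min_le_right _ _
        rw [le_div_iff₀ (hπ3 i)]
        linarith [hxα i]
      · rw [← hα, add_sub_cancel]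
    · rintro ⟨α, h1, h2, rfl⟩
      refine isEquil_of_transpose_mulVec_add_eq (hflow α) (fun i => ?_) fun i => ?_
      · have := mul_le_mul_of_nonneg_right h1 (hπ3 i).le
        simp only [Pi.add_apply, Pi.smul_apply, smul_eq_mul, Pi.zero_apply]
        linarith [haν i]
      · have := mul_le_mul_of_nonneg_right h2 (hπ3 i).le
        simp only [Pi.add_apply, Pi.smul_apply, smul_eq_mul]
        linarith [hbν i]
  refine ⟨hset, ?_⟩
  rw [hset]
  have hinj : Function.Injective fun α : ℝ => ν + α • π := by
    intro α β h
    have h0 := congrFun (add_left_cancel h) ⟨0, hn⟩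
    exact mul_right_cancel₀ (hπ3 _).ne' h0
  refine ((Set.Icc_infinite (show -a < b by linarith)).image hinj.injOn).mono ?_
  rintro _ ⟨α, ⟨h1, h2⟩, rfl⟩
  exact ⟨α, h1, h2, rfl⟩
end

section
/- Let n ≥ 1, let P be an n×n nonnegative row sub-stochastic matrix, let w ∈ ℝ^n with w ≥ 0, and let c ∈ ℝ^n. Let S ⊆ {1,…,n} be an irreducible trapping set of G_P and suppose that either (a) the restricted matrix P_{SS} is out-connected (i.e., the set O_S = {i ∈ S : Σ_{j∈S} P_{ij} < 1} is nonempty and every node of S has a directed path within S to some node of O_S), or (b) for some equilibrium x of (P, w) with exogenous flow c, Σ_{j∈S} ( c_j + Σ_{i∉S} P_{ij} x_i ) ≠ 0. Then any two equilibria x and y of (P, w) with exogenous flow c agree on S: x_j = y_j for every j ∈ S. -/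
open Matrix Finset Filter Topology

/-- A trapping set of `G_P`: a nonempty set of nodes with no links pointing out of it. -/
def TrapSet {n : ℕ} (P : Matrix (Fin n) (Fin n) ℝ) (S : Finset (Fin n)) : Prop :=
  S.Nonempty ∧ ∀ i ∈ S, ∀ j ∉ S, P i j = 0

/-- An irreducible trapping set: a trapping set not strictly containing any trapping set. -/
def IrredTrapSet {n : ℕ} (P : Matrix (Fin n) (Fin n) ℝ) (S : Finset (Fin n)) : Prop :=
  TrapSet P S ∧ ∀ S', TrapSet P S' → S' ⊆ S → S' = S

theorem abs_clamp_sub_clamp_le (u v w : ℝ) :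
    |min (max u 0) w - min (max v 0) w| ≤ |u - v| :=
  (abs_min_sub_min_le_max _ _ _ _).trans <| max_le
    ((abs_max_sub_max_le_max _ _ _ _).trans (by simp)) (by simp)

/-- If clamping to `[0, w]` preserves a nonzero distance, then the first point is not clamped. -/
theorem clamp_eq_self_of_abs_sub_eq {u v w : ℝ} (hw : 0 ≤ w) (huv : u ≠ v)
    (h : |min (max u 0) w - min (max v 0) w| = |u - v|) : min (max u 0) w = u := by
  grind

theorem IsEquil.apply {n : ℕ} {P : Matrix (Fin n) (Fin n) ℝ} {w c x : Fin n → ℝ}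
    (hx : IsEquil P w c x) (j : Fin n) :
    x j = min (max (∑ i, P i j * x i + c j) 0) (w j) := by
  have h := congrFun hx j
  simpa [sat, Matrix.mulVec, dotProduct] using h

section Difference

variable {n : ℕ} {P : Matrix (Fin n) (Fin n) ℝ} {w c x y : Fin n → ℝ}

theorem IsEquil.abs_sub_le_abs_sum (hx : IsEquil P w c x) (hy : IsEquil P w c y) (j : Fin n) :
    |x j - y j| ≤ |∑ i, P i j * x i - ∑ i, P i j * y i| := by
  have h := abs_clamp_sub_clamp_le (∑ i, P i j * x i + c j) (∑ i, P i j * y i + c j) (w j)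
  rwa [← hx.apply, ← hy.apply, add_sub_add_right_eq_sub] at h

theorem abs_sum_sub_sum_le_sum_mul_abs (hP : ∀ i j, 0 ≤ P i j) (x y : Fin n → ℝ) (j : Fin n) :
    |∑ i, P i j * x i - ∑ i, P i j * y i| ≤ ∑ i, P i j * |x i - y i| := by
  rw [← Finset.sum_sub_distrib]
  refine (Finset.abs_sum_le_sum_abs _ _).trans (Finset.sum_le_sum fun i _ => ?_)
  rw [← mul_sub, abs_mul, abs_of_nonneg (hP i j)]

theorem sum_sum_mul_abs_eq (x y : Fin n → ℝ) :
    ∑ j, ∑ i, P i j * |x i - y i| = ∑ i, (∑ j, P i j) * |x i - y i| := by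
  rw [Finset.sum_comm]
  simp_rw [Finset.sum_mul]

theorem rowSum_mul_abs_le (hsub : ∀ i, ∑ j, P i j ≤ 1) (x y : Fin n → ℝ) (i : Fin n) :
    (∑ j, P i j) * |x i - y i| ≤ |x i - y i| :=
  mul_le_of_le_one_left (abs_nonneg _) (hsub i)

/-- The absolute difference of two equilibria is an invariant measure of `P`. -/
theorem IsEquil.abs_sub_eq_sum (hP : ∀ i j, 0 ≤ P i j) (hsub : ∀ i, ∑ j, P i j ≤ 1)
    (hx : IsEquil P w c x) (hy : IsEquil P w c y) (j : Fin n) :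
    |x j - y j| = ∑ i, P i j * |x i - y i| := by
  have hle (j : Fin n) (_ : j ∈ univ) : |x j - y j| ≤ ∑ i, P i j * |x i - y i| :=
    (hx.abs_sub_le_abs_sum hy j).trans (abs_sum_sub_sum_le_sum_mul_abs hP x y j)
  refine (Finset.sum_eq_sum_iff_of_le hle).1 (le_antisymm (Finset.sum_le_sum hle) ?_) j
    (mem_univ j)
  rw [sum_sum_mul_abs_eq]
  exact Finset.sum_le_sum fun i _ => rowSum_mul_abs_le hsub x y i

theorem IsEquil.rowSum_mul_abs_eq (hP : ∀ i j, 0 ≤ P i j) (hsub : ∀ i, ∑ j, P i j ≤ 1)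
    (hx : IsEquil P w c x) (hy : IsEquil P w c y) (i : Fin n) :
    (∑ j, P i j) * |x i - y i| = |x i - y i| := by
  refine (Finset.sum_eq_sum_iff_of_le fun i _ => rowSum_mul_abs_le hsub x y i).1 ?_ i (mem_univ i)
  rw [← sum_sum_mul_abs_eq]
  exact Finset.sum_congr rfl fun j _ => (hx.abs_sub_eq_sum hP hsub hy j).symm

/-- Where two equilibria differ, the first one is not saturated. -/
theorem IsEquil.apply_eq_of_ne (hP : ∀ i j, 0 ≤ P i j) (hsub : ∀ i, ∑ j, P i j ≤ 1)
    (hw : 0 ≤ w) (hx : IsEquil P w c x) (hy : IsEquil P w c y) {j : Fin n} (hj : x j ≠ y j) :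
    x j = ∑ i, P i j * x i + c j := by
  have h : |x j - y j| = |(∑ i, P i j * x i + c j) - (∑ i, P i j * y i + c j)| := by
    rw [add_sub_add_right_eq_sub]
    refine le_antisymm (hx.abs_sub_le_abs_sum hy j) ?_
    rw [hx.abs_sub_eq_sum hP hsub hy j]
    exact abs_sum_sub_sum_le_sum_mul_abs hP x y j
  rw [hx.apply j]
  refine clamp_eq_self_of_abs_sub_eq (v := ∑ i, P i j * y i + c j) (hw j) ?_ ?_
  · intro huv
    exact hj (by rw [hx.apply j, hy.apply j, huv])
  · rwa [← hx.apply, ← hy.apply]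

end Difference

section TrappingSet

variable {n : ℕ} {P : Matrix (Fin n) (Fin n) ℝ} {w c x y : Fin n → ℝ} {S : Finset (Fin n)}

theorem TrapSet.sum_eq_rowSum (hS : TrapSet P S) {i : Fin n} (hi : i ∈ S) :
    ∑ j ∈ S, P i j = ∑ j, P i j :=
  Finset.sum_subset (subset_univ S) fun j _ hj => hS.2 i hi j hj

theorem sum_mul_eq_inside_add_outside (z : Fin n → ℝ) (j : Fin n) :
    ∑ i, P i j * z i = ∑ i ∈ S, P i j * z i + ∑ i ∈ Sᶜ, P i j * z i :=
  (Finset.sum_add_sum_compl S _).symm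

/-- If every row sum on `S` is one wherever `z` is nonzero, then flow inside `S` is conserved. -/
theorem TrapSet.sum_inside_eq (hS : TrapSet P S) {z : Fin n → ℝ}
    (hz : ∀ i ∈ S, (∑ j, P i j) * z i = z i) :
    ∑ j ∈ S, ∑ i ∈ S, P i j * z i = ∑ i ∈ S, z i := by
  rw [Finset.sum_comm]
  refine Finset.sum_congr rfl fun i hi => ?_
  rw [← Finset.sum_mul, hS.sum_eq_rowSum hi, hz i hi]

/-- Equilibria can only differ at outside nodes that send no flow into a trapping set. -/
theorem IsEquil.mul_eq_mul_of_trapSet (hP : ∀ i j, 0 ≤ P i j) (hsub : ∀ i, ∑ j, P i j ≤ 1)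
    (hS : TrapSet P S) (hx : IsEquil P w c x) (hy : IsEquil P w c y)
    {i j : Fin n} (hi : i ∉ S) (hj : j ∈ S) : P i j * x i = P i j * y i := by
  have hnonneg (i j : Fin n) : 0 ≤ P i j * |x i - y i| := mul_nonneg (hP i j) (abs_nonneg _)
  have hsum : ∑ j ∈ S, ∑ i ∈ Sᶜ, P i j * |x i - y i| = 0 := by
    have h := Finset.sum_congr rfl fun j (_ : j ∈ S) => hx.abs_sub_eq_sum hP hsub hy j
    simp_rw [sum_mul_eq_inside_add_outside (S := S) (fun i => |x i - y i|)] at h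
    rw [Finset.sum_add_distrib,
      hS.sum_inside_eq fun i _ => hx.rowSum_mul_abs_eq hP hsub hy i] at h
    linarith
  have hzero := (Finset.sum_eq_zero_iff_of_nonneg fun i _ => hnonneg i j).1
    ((Finset.sum_eq_zero_iff_of_nonneg fun j _ => Finset.sum_nonneg fun i _ => hnonneg i j).1
      hsum j hj) i (mem_compl.2 hi)
  rcases mul_eq_zero.1 hzero with h | h
  · simp [h]
  · rw [sub_eq_zero.1 (abs_eq_zero.1 h)]

/-- Two equilibria that differ somewhere on an irreducible trapping set differ everywhere on it. -/
theorem IsEquil.ne_of_irredTrapSet (hP : ∀ i j, 0 ≤ P i j) (hsub : ∀ i, ∑ j, P i j ≤ 1)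
    (hS : IrredTrapSet P S) (hx : IsEquil P w c x) (hy : IsEquil P w c y)
    {k : Fin n} (hk : k ∈ S) (hne : x k ≠ y k) {j : Fin n} (hj : j ∈ S) : x j ≠ y j := by
  have htrap : TrapSet P (S.filter fun i => x i ≠ y i) := by
    refine ⟨⟨k, by simp [hk, hne]⟩, fun a ha b hb => ?_⟩
    obtain ⟨haS, hane⟩ := mem_filter.1 ha
    by_cases hbS : b ∈ S
    · have hbeq : x b = y b := by simpa [hbS] using hb
      have h := hx.abs_sub_eq_sum hP hsub hy b
      rw [hbeq, sub_self, abs_zero, eq_comm, Finset.sum_eq_zero_iff_of_nonneg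
        fun i _ => mul_nonneg (hP i b) (abs_nonneg _)] at h
      exact (mul_eq_zero.1 (h a (mem_univ a))).resolve_right
        (abs_ne_zero.2 (sub_ne_zero.2 hane))
    · exact hS.1.2 a haS b hbS
  have hmem := hS.2 _ htrap (filter_subset _ _) ▸ hj
  exact (mem_filter.1 hmem).2

end TrappingSet

/-- on an irreducible trapping set `S` whose restricted matrix is
out-connected, or on which the total incoming exogenous flow (at some equilibrium) is
nonzero, any two equilibria agree. -/
theorem equilibria_agree_on_trapping_set_unique_cases
    {n : ℕ} (hn : 1 ≤ n) (P : Matrix (Fin n) (Fin n) ℝ)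
    (hP : ∀ i j, 0 ≤ P i j) (hsub : ∀ i, ∑ j, P i j ≤ 1)
    (w : Fin n → ℝ) (hw : 0 ≤ w) (c : Fin n → ℝ)
    (S : Finset (Fin n)) (hS : IrredTrapSet P S)
    (hcond :
      ((∃ i ∈ S, ∑ j ∈ S, P i j < 1) ∧
        ∀ i ∈ S, ∃ j ∈ S,
          Relation.ReflTransGen (fun a b => a ∈ S ∧ b ∈ S ∧ 0 < P a b) i j ∧
          ∑ k ∈ S, P j k < 1) ∨
      (∃ x : Fin n → ℝ, IsEquil P w c x ∧
        ∑ j ∈ S, (c j + ∑ i ∈ Sᶜ, P i j * x i) ≠ 0)) :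
    ∀ x y : Fin n → ℝ, IsEquil P w c x → IsEquil P w c y → ∀ j ∈ S, x j = y j := by
  intro x y hx hy k hk
  by_contra hne
  have hdiff (j : Fin n) (hj : j ∈ S) : x j ≠ y j :=
    hx.ne_of_irredTrapSet hP hsub hS hy hk hne hj
  have hrow (i : Fin n) (hi : i ∈ S) : ∑ j, P i j = 1 :=
    mul_right_cancel₀ (abs_ne_zero.2 (sub_ne_zero.2 (hdiff i hi)))
      ((hx.rowSum_mul_abs_eq hP hsub hy i).trans (one_mul _).symm)
  rcases hcond with ⟨⟨i, hi, hlt⟩, -⟩ | ⟨z, hz, hflow⟩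
  · rw [hS.1.sum_eq_rowSum hi, hrow i hi] at hlt
    exact lt_irrefl _ hlt
  · have hswap : ∑ j ∈ S, (c j + ∑ i ∈ Sᶜ, P i j * z i) =
        ∑ j ∈ S, (c j + ∑ i ∈ Sᶜ, P i j * x i) :=
      Finset.sum_congr rfl fun j hj => congrArg (c j + ·) <| Finset.sum_congr rfl fun i hi =>
        hz.mul_eq_mul_of_trapSet hP hsub hS.1 hx (mem_compl.1 hi) hj
    have hbalance : ∑ j ∈ S, x j =
        ∑ j ∈ S, (∑ i ∈ S, P i j * x i + (c j + ∑ i ∈ Sᶜ, P i j * x i)) :=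
      Finset.sum_congr rfl fun j hj => by
        have h := hx.apply_eq_of_ne hP hsub hw hy (hdiff j hj)
        rw [sum_mul_eq_inside_add_outside (S := S)] at h
        linarith
    rw [Finset.sum_add_distrib, hS.1.sum_inside_eq fun i hi => by rw [hrow i hi, one_mul]]
      at hbalance
    exact hflow (hswap.trans (by linarith))
end
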